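/- arXiv:1808.03613 — 2 statements merged into one kernel-verified Lean document; each statement's English description precedes it below -/
import Mathlib

section
/- Let q be a prime power, F_q a finite field with q elements, and let K, m1, m2, m12 be integers with m1, m2 ≥ K ≥ 0 and 0 ≤ m12 ≤ min(m1, m2). Let S be an m12×K, A1 an (m1−m12)×K, and A2 an (m2−m12)×K random matrix over F_q, all entries independent and uniform on F_q; set X1 = [S; A1] and X2 = [S; A2] (vertical stacking), so X1 and X2 share the m12 common rows S. Then the probability that X1 and X2 simultaneously have rank K equals P2((m1, m2, m12), K) = ∑_{i = max(0, K−m1+m12, K−m2+m12)}^{min(m12, K)} P_i(m12, K) · P(m1 − m12, K − i) · P(m2 − m12, K − i). -/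
open Finset

/-- `P(m,K) = ∏_{i=0}^{K-1} (1 - q^{i-m})`. -/
noncomputable def Pfr (q m K : ℕ) : ℝ :=
  ∏ i ∈ Finset.range K, (1 - (q : ℝ) ^ ((i : ℤ) - (m : ℤ)))

/-- The Gaussian binomial coefficient `[K; r]_q`. -/
noncomputable def gaussBinom (q K r : ℕ) : ℝ :=
  ∏ i ∈ Finset.range r, (((q : ℝ) ^ (K - i) - 1) / ((q : ℝ) ^ (r - i) - 1))

/-- `P_r(m,K) = q^{-m(K-r)} · [K; r]_q · ∏_{i=0}^{r-1} (1 - q^{i-m})`. -/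
noncomputable def Prk (q m K r : ℕ) : ℝ :=
  (q : ℝ) ^ (-(m : ℤ) * ((K : ℤ) - (r : ℤ))) * gaussBinom q K r *
    ∏ i ∈ Finset.range r, (1 - (q : ℝ) ^ ((i : ℤ) - (m : ℤ)))

/-- `P2((m1,m2,m12),K)`: the lower summation bound `max(0, K-m1+m12, K-m2+m12)` is
expressed using truncated natural subtraction as `max (K+m12-m1) (K+m12-m2)`. -/
noncomputable def P2 (q K m1 m2 m12 : ℕ) : ℝ :=
  ∑ i ∈ Finset.Icc (max (K + m12 - m1) (K + m12 - m2)) (min m12 K),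
    Prk q m12 K i * Pfr q (m1 - m12) (K - i) * Pfr q (m2 - m12) (K - i)

/-!
Coordinates turn an `m`-tuple in a `d`-dimensional space over `F_q` into `d` vectors of `F_q^m`, and
since row rank equals column rank the tuple spans exactly when these are linearly independent. Thus
`m` random vectors span with probability `P(m, d)`. Applied in a quotient `V ⧸ U`, this gives the
probability of completing `U` to `V`; applied in each `r`-dimensional `U`, it shows that the number
of `m`-tuples of rank `r` is the number of such `U` times `q^{mr} P(m, r)`. Taking `m = r` in the
latter counts linearly independent tuples, which identifies the number of subspaces as the Gaussian
binomial.

Given the shared rows `S`, the two completions are independent and their probabilities depend only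
on `rank S`, so summing over the value of `rank S` gives the formula.
-/

open Module

section Formulas

variable {q : ℕ}

lemma pow_mul_Pfr (hq : q ≠ 0) (m K : ℕ) :
    (q : ℝ) ^ (m * K) * Pfr q m K = ∏ i ∈ range K, ((q : ℝ) ^ m - (q : ℝ) ^ i) := by
  have hq' : (q : ℝ) ≠ 0 := by exact_mod_cast hq
  have hconst : (q : ℝ) ^ (m * K) = ∏ _i ∈ range K, (q : ℝ) ^ m := by
    rw [prod_const, card_range, pow_mul]
  rw [Pfr, hconst, ← prod_mul_distrib]
  refine prod_congr rfl fun i _ => ?_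
  rw [zpow_sub₀ hq', zpow_natCast, zpow_natCast]
  field_simp

lemma Pfr_eq_zero_of_lt {m K : ℕ} (h : m < K) : Pfr q m K = 0 :=
  prod_eq_zero (mem_range.2 h) (by simp)

lemma Pfr_self_ne_zero (hq : 1 < q) (r : ℕ) : Pfr q r r ≠ 0 := by
  have hq' : (1 : ℝ) < q := by exact_mod_cast hq
  refine prod_ne_zero_iff.2 fun i hi => (sub_pos.2 ?_).ne'
  exact zpow_lt_one_of_neg₀ hq' (by have := mem_range.1 hi; omega)

lemma gaussBinom_mul_pow_mul_Pfr (hq : 1 < q) {K r : ℕ} (hr : r ≤ K) :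
    gaussBinom q K r * ((q : ℝ) ^ (r * r) * Pfr q r r) = (q : ℝ) ^ (K * r) * Pfr q K r := by
  have hq' : (1 : ℝ) < q := by exact_mod_cast hq
  rw [pow_mul_Pfr (by omega), pow_mul_Pfr (by omega), gaussBinom, ← prod_mul_distrib]
  refine prod_congr rfl fun i hi => ?_
  have hi : i < r := mem_range.1 hi
  have factor {n : ℕ} (hn : i ≤ n) :
      (q : ℝ) ^ n - (q : ℝ) ^ i = (q : ℝ) ^ i * ((q : ℝ) ^ (n - i) - 1) := by
    rw [mul_sub_one, pow_mul_pow_sub _ hn]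
  have hden : (q : ℝ) ^ (r - i) - 1 ≠ 0 :=
    sub_ne_zero.2 (one_lt_pow₀ hq' (Nat.sub_ne_zero_of_lt hi)).ne'
  rw [factor hi.le, factor (hi.le.trans hr)]
  field_simp

lemma pow_mul_Prk (hq : q ≠ 0) (m K r : ℕ) :
    (q : ℝ) ^ (m * K) * Prk q m K r = gaussBinom q K r * ((q : ℝ) ^ (m * r) * Pfr q m r) := by
  have hq' : (q : ℝ) ≠ 0 := by exact_mod_cast hq
  have hpow : (q : ℝ) ^ (m * K) * (q : ℝ) ^ (-(m : ℤ) * ((K : ℤ) - r)) = (q : ℝ) ^ (m * r) := by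
    rw [← zpow_natCast, ← zpow_natCast, ← zpow_add₀ hq']
    congr 1
    push_cast
    ring
  rw [Prk, ← hpow, Pfr]
  ring

lemma Prk_eq_zero_of_lt {m r : ℕ} (K : ℕ) (h : m < r) : Prk q m K r = 0 :=
  mul_eq_zero_of_right _ (Pfr_eq_zero_of_lt h)

lemma P2_add_add (K s a b : ℕ) :
    P2 q K (s + a) (s + b) s =
      ∑ r ∈ range (K + 1), Prk q s K r * Pfr q a (K - r) * Pfr q b (K - r) := by
  rw [P2, Nat.add_sub_cancel_left, Nat.add_sub_cancel_left]
  refine sum_subset (fun r hr => ?_) fun r hr hr' => ?_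
  · simp only [mem_Icc, mem_range] at hr ⊢
    omega
  · simp only [mem_Icc, mem_range] at hr hr'
    obtain h | h | h : s < r ∨ a < K - r ∨ b < K - r := by omega
    · rw [Prk_eq_zero_of_lt K h, zero_mul, zero_mul]
    · rw [Pfr_eq_zero_of_lt h, mul_zero, zero_mul]
    · rw [Pfr_eq_zero_of_lt h, mul_zero]

end Formulas

section Fibers

-- A surjective homomorphism carries the uniform distribution to the uniform distribution.
lemma card_subtype_comp_mul_card {G H : Type*} [AddGroup G] [AddGroup H] (f : G →+ H)
    (hf : Function.Surjective f) (p : H → Prop) :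
    Nat.card {x // p (f x)} * Nat.card H = Nat.card {y // p y} * Nat.card G := by
  have hcard (p : H → Prop) : Nat.card {x // p (f x)} = Nat.card {y // p y} * Nat.card f.ker := by
    rw [← Nat.card_prod]
    exact Nat.card_congr <| (Equiv.sigmaSubtypeFiberEquivSubtype f fun _ => Iff.rfl).symm.trans <|
      (Equiv.sigmaCongrRight fun y : Subtype p => f.fiberEquivKerOfSurjective hf y).trans
        (Equiv.sigmaEquivProd _ _)
  have hG : Nat.card G = Nat.card H * Nat.card f.ker := by
    simpa [Nat.card_congr (Equiv.subtypeUnivEquiv _)] using hcard fun _ => True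
  rw [hcard, hG]
  ring

lemma card_subtype_and_eq_sum {α β γ : Type*} [Fintype α] [Finite β] [Finite γ]
    (p : α → β → Prop) (r : α → γ → Prop) :
    Nat.card {x : α × β × γ // p x.1 x.2.1 ∧ r x.1 x.2.2} =
      ∑ a, Nat.card {b // p a b} * Nat.card {c // r a c} := by
  let e : {x : α × β × γ // p x.1 x.2.1 ∧ r x.1 x.2.2} ≃ Σ a, {b // p a b} × {c // r a c} :=
    { toFun := fun x => ⟨x.1.1, ⟨x.1.2.1, x.2.1⟩, ⟨x.1.2.2, x.2.2⟩⟩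
      invFun := fun y => ⟨⟨y.1, y.2.1, y.2.2⟩, y.2.1.2, y.2.2.2⟩ }
  simp only [Nat.card_congr e, Nat.card_sigma, Nat.card_prod]

lemma sum_comp_eq_sum_card_fiber_mul {α κ R : Type*} [Fintype α] [Semiring R]
    {t : Finset κ} {g : α → κ} (hg : ∀ a, g a ∈ t) (f : κ → R) :
    ∑ a, f (g a) = ∑ k ∈ t, Nat.card {a // g a = k} * f k := by
  classical
  rw [← sum_fiberwise_of_maps_to' (fun a _ => hg a) f]
  simp only [sum_const, nsmul_eq_mul, Nat.card_eq_fintype_card, Fintype.card_subtype]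

end Fibers

section Span

variable {ι R M : Type*} [Ring R] [AddCommGroup M] [Module R M]

lemma span_range_coe_eq_iff {U : Submodule R M} (w : ι → U) :
    Submodule.span R (Set.range fun i => (w i : M)) = U ↔
      Submodule.span R (Set.range w) = ⊤ := by
  have hmap : Submodule.span R (Set.range fun i => (w i : M)) =
      (Submodule.span R (Set.range w)).map U.subtype := by
    rw [Submodule.map_span, ← Set.range_comp]
    rfl
  rw [hmap, ← (Submodule.map_injective_of_injective U.injective_subtype).eq_iff,
    Submodule.map_subtype_top]

lemma span_range_mkQ_eq_top_iff (U : Submodule R M) (w : ι → M) :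
    Submodule.span R (Set.range fun i => U.mkQ (w i)) = ⊤ ↔
      U ⊔ Submodule.span R (Set.range w) = ⊤ := by
  rw [← Submodule.map_mkQ_eq_top, Submodule.map_span, ← Set.range_comp]
  rfl

lemma span_range_eq_top_iff_linearIndependent_row {F V κ : Type*} [Field F] [AddCommGroup V]
    [Module F V] [Finite ι] [Finite κ] (b : Basis κ F V) (w : ι → V) :
    Submodule.span F (Set.range w) = ⊤ ↔ LinearIndependent F (b.toMatrix w).row := by
  have := Module.Finite.of_basis b
  cases nonempty_fintype ι
  cases nonempty_fintype κ
  have hcol : Submodule.span F (Set.range (b.toMatrix w).col) =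
      (Submodule.span F (Set.range w)).map b.equivFun.toLinearMap := by
    rw [Submodule.map_span, ← Set.range_comp]
    rfl
  have hrank : Set.finrank F (Set.range (b.toMatrix w).row) =
      finrank F (Submodule.span F (Set.range w)) := by
    rw [Set.finrank, ← Matrix.rank_eq_finrank_span_row, Matrix.rank_eq_finrank_span_cols, hcol,
      LinearEquiv.finrank_map_eq]
  rw [linearIndependent_iff_card_eq_finrank_span, hrank, ← finrank_eq_card_basis b, eq_comm]
  exact ⟨fun h => by rw [← h, finrank_top], fun h => (Submodule.eq_top_of_finrank_eq h.symm).symm⟩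

end Span

section RandomVectors

variable {F V ι : Type*} [Field F] [Fintype F] [AddCommGroup V] [Module F V] [Finite V] [Fintype ι]

variable (F ι V) in
lemma natCard_fun_eq_pow :
    Nat.card (ι → V) = Fintype.card F ^ (Fintype.card ι * finrank F V) := by
  rw [Nat.card_fun, natCard_eq_pow_finrank (K := F), ← pow_mul, Nat.card_eq_fintype_card,
    Nat.card_eq_fintype_card, mul_comm]

variable (F V) in
lemma card_linearIndependent_eq_mul_Pfr (k : ℕ) :
    (Nat.card {w : Fin k → V // LinearIndependent F w} : ℝ) =
      Nat.card (Fin k → V) * Pfr (Fintype.card F) (finrank F V) k := by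
  obtain hk | hk := le_or_gt k (finrank F V)
  · rw [card_linearIndependent hk, natCard_fun_eq_pow F, Fintype.card_fin, mul_comm k,
      Nat.cast_pow, pow_mul_Pfr Fintype.card_ne_zero, Nat.cast_prod,
      Fin.prod_univ_eq_prod_range
        (fun i => ((Fintype.card F ^ finrank F V - Fintype.card F ^ i : ℕ) : ℝ))]
    refine prod_congr rfl fun i hi => ?_
    rw [Nat.cast_sub, Nat.cast_pow, Nat.cast_pow]
    exact Nat.pow_le_pow_right Fintype.card_pos ((mem_range.1 hi).le.trans hk)
  · have : IsEmpty {w : Fin k → V // LinearIndependent F w} :=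
      ⟨fun w => hk.not_ge (by simpa using w.2.fintype_card_le_finrank)⟩
    rw [Nat.card_of_isEmpty, Pfr_eq_zero_of_lt hk, Nat.cast_zero, mul_zero]

variable (F V ι) in
lemma card_span_eq_top :
    (Nat.card {w : ι → V // Submodule.span F (Set.range w) = ⊤} : ℝ) =
      Nat.card (ι → V) * Pfr (Fintype.card F) (Fintype.card ι) (finrank F V) := by
  let b := finBasis F V
  let coords : (ι → V) ≃ (Fin (finrank F V) → ι → F) :=
    (Equiv.piCongrRight fun _ => b.equivFun.toEquiv).trans (Equiv.piComm _)
  rw [Nat.card_congr (coords.subtypeEquiv (q := fun v => LinearIndependent F v)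
      (span_range_eq_top_iff_linearIndependent_row b)),
    card_linearIndependent_eq_mul_Pfr, finrank_fintype_fun_eq_card, Nat.card_congr coords]

lemma card_span_eq (U : Submodule F V) :
    (Nat.card {w : ι → V // Submodule.span F (Set.range w) = U} : ℝ) =
      Nat.card (ι → U) * Pfr (Fintype.card F) (Fintype.card ι) (finrank F U) := by
  let e : {w : ι → U // Submodule.span F (Set.range w) = ⊤} ≃
      {w : ι → V // Submodule.span F (Set.range w) = U} :=
    { toFun := fun w => ⟨fun i => w.1 i, (span_range_coe_eq_iff w.1).2 w.2⟩
      invFun := fun w => ⟨fun i => ⟨w.1 i, w.2.le (Submodule.subset_span ⟨i, rfl⟩)⟩,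
        (span_range_coe_eq_iff _).1 w.2⟩ }
  rw [← Nat.card_congr e, card_span_eq_top]

variable (F V ι) in
lemma card_finrank_span_eq_card_submodule_mul (r : ℕ) :
    (Nat.card {w : ι → V // finrank F (Submodule.span F (Set.range w)) = r} : ℝ) =
      Nat.card {U : Submodule F V // finrank F U = r} *
        ((Fintype.card F : ℝ) ^ (Fintype.card ι * r) *
          Pfr (Fintype.card F) (Fintype.card ι) r) := by
  have := Fintype.ofFinite {U : Submodule F V // finrank F U = r}
  have hfiber (U : {U : Submodule F V // finrank F U = r}) :
      (Nat.card {w : ι → V // Submodule.span F (Set.range w) = U} : ℝ) =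
        (Fintype.card F : ℝ) ^ (Fintype.card ι * r) *
          Pfr (Fintype.card F) (Fintype.card ι) r := by
    rw [card_span_eq, natCard_fun_eq_pow F, U.2, Nat.cast_pow]
  rw [← Nat.card_congr (Equiv.sigmaSubtypeFiberEquivSubtype
      (q := fun U : Submodule F V => finrank F U = r)
      (fun w : ι → V => Submodule.span F (Set.range w)) fun _ => Iff.rfl),
    Nat.card_sigma, Nat.cast_sum, sum_congr rfl fun U _ => hfiber U, sum_const, nsmul_eq_mul,
    card_univ, Nat.card_eq_fintype_card]

lemma card_submodule_finrank_eq {r : ℕ} (hr : r ≤ finrank F V) :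
    (Nat.card {U : Submodule F V // finrank F U = r} : ℝ) =
      gaussBinom (Fintype.card F) (finrank F V) r := by
  have hq : 1 < Fintype.card F := Fintype.one_lt_card
  have hindep (w : Fin r → V) :
      LinearIndependent F w ↔ finrank F (Submodule.span F (Set.range w)) = r := by
    rw [linearIndependent_iff_card_eq_finrank_span, Fintype.card_fin, Set.finrank, eq_comm]
  have hcount := card_finrank_span_eq_card_submodule_mul F V (Fin r) r
  rw [← Nat.card_congr (Equiv.subtypeEquivRight hindep), card_linearIndependent_eq_mul_Pfr,
    natCard_fun_eq_pow F, Fintype.card_fin, Nat.cast_pow, mul_comm r (finrank F V),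
    ← gaussBinom_mul_pow_mul_Pfr hq hr] at hcount
  have hq0 : (Fintype.card F : ℝ) ≠ 0 := by positivity
  exact (mul_right_cancel₀ (mul_ne_zero (pow_ne_zero _ hq0) (Pfr_self_ne_zero hq r)) hcount).symm

variable (ι) in
lemma card_finrank_span_eq {r : ℕ} (hr : r ≤ finrank F V) :
    (Nat.card {w : ι → V // finrank F (Submodule.span F (Set.range w)) = r} : ℝ) =
      Nat.card (ι → V) * Prk (Fintype.card F) (Fintype.card ι) (finrank F V) r := by
  rw [card_finrank_span_eq_card_submodule_mul, card_submodule_finrank_eq hr,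
    natCard_fun_eq_pow F, Nat.cast_pow, pow_mul_Prk Fintype.card_ne_zero]

variable (ι) in
lemma card_sup_span_eq_top (U : Submodule F V) :
    (Nat.card {w : ι → V // U ⊔ Submodule.span F (Set.range w) = ⊤} : ℝ) =
      Nat.card (ι → V) *
        Pfr (Fintype.card F) (Fintype.card ι) (finrank F V - finrank F U) := by
  have := Finite.of_surjective _ U.mkQ_surjective
  have hquot := card_subtype_comp_mul_card (U.mkQ.toAddMonoidHom.compLeft ι)
    U.mkQ_surjective.comp_left fun w => Submodule.span F (Set.range w) = ⊤
  have hlift : Nat.card {w : ι → V // U ⊔ Submodule.span F (Set.range w) = ⊤} =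
      Nat.card {w : ι → V // Submodule.span F (Set.range fun i => U.mkQ (w i)) = ⊤} :=
    Nat.card_congr (Equiv.subtypeEquivRight fun w => (span_range_mkQ_eq_top_iff U w).symm)
  have hne : (Nat.card (ι → V ⧸ U) : ℝ) ≠ 0 := Nat.cast_ne_zero.2 Nat.card_pos.ne'
  refine mul_right_cancel₀ hne ?_
  calc (Nat.card {w : ι → V // U ⊔ Submodule.span F (Set.range w) = ⊤} : ℝ) *
        Nat.card (ι → V ⧸ U)
    _ = (Nat.card {w : ι → V ⧸ U // Submodule.span F (Set.range w) = ⊤} : ℝ) *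
        Nat.card (ι → V) := by
      rw [hlift]
      exact_mod_cast hquot
    _ = Nat.card (ι → V) *
          Pfr (Fintype.card F) (Fintype.card ι) (finrank F V - finrank F U) *
        Nat.card (ι → V ⧸ U) := by
      rw [card_span_eq_top, Submodule.finrank_quotient]
      ring

variable (F V ι) in
lemma card_sup_span_eq_top_and_sup_span_eq_top (α β : Type*) [Fintype α] [Fintype β] :
    (Nat.card {w : (ι → V) × (α → V) × (β → V) //
        Submodule.span F (Set.range w.1) ⊔ Submodule.span F (Set.range w.2.1) = ⊤ ∧
          Submodule.span F (Set.range w.1) ⊔ Submodule.span F (Set.range w.2.2) = ⊤} : ℝ) =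
      Nat.card ((ι → V) × (α → V) × (β → V)) *
        P2 (Fintype.card F) (finrank F V) (Fintype.card ι + Fintype.card α)
          (Fintype.card ι + Fintype.card β) (Fintype.card ι) := by
  have := Fintype.ofFinite (ι → V)
  rw [card_subtype_and_eq_sum (β := α → V) (γ := β → V)
      (fun (s : ι → V) a => Submodule.span F (Set.range s) ⊔ Submodule.span F (Set.range a) = ⊤)
      (fun s b => Submodule.span F (Set.range s) ⊔ Submodule.span F (Set.range b) = ⊤)]
  simp only [Nat.cast_sum, Nat.cast_mul, card_sup_span_eq_top]
  rw [sum_comp_eq_sum_card_fiber_mul (t := range (finrank F V + 1))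
      (g := fun s : ι → V => finrank F (Submodule.span F (Set.range s)))
      (fun _ => mem_range_succ_iff.2 (Submodule.finrank_le _)) (fun r =>
        Nat.card (α → V) * Pfr (Fintype.card F) (Fintype.card α) (finrank F V - r) *
          (Nat.card (β → V) * Pfr (Fintype.card F) (Fintype.card β) (finrank F V - r))),
    P2_add_add, mul_sum]
  refine sum_congr rfl fun r hr => ?_
  rw [card_finrank_span_eq ι (mem_range_succ_iff.1 hr), Nat.card_prod, Nat.card_prod]
  push_cast
  ring

end RandomVectors

lemma rank_fromRows_eq_card_iff {F ι α κ : Type*} [Field F] [Finite ι] [Finite α] [Fintype κ]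
    (S : Matrix ι κ F) (A : Matrix α κ F) :
    (Matrix.fromRows S A).rank = Fintype.card κ ↔
      Submodule.span F (Set.range S.row) ⊔ Submodule.span F (Set.range A.row) = ⊤ := by
  have hrow : Set.range (Matrix.fromRows S A).row = Set.range S.row ∪ Set.range A.row :=
    Set.Sum.elim_range _ _
  rw [Matrix.rank_eq_finrank_span_row, hrow, Submodule.span_union, ← finrank_fintype_fun_eq_card F]
  exact ⟨Submodule.eq_top_of_finrank_eq, fun h => by rw [h, finrank_top]⟩

theorem joint_full_rank_prob_general (F ι α β κ : Type*) [Field F] [Fintype F]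
    [Fintype ι] [Fintype α] [Fintype β] [Fintype κ]
    [DecidableEq ι] [DecidableEq α] [DecidableEq β] [DecidableEq κ] :
    (#{X : Matrix ι κ F × Matrix α κ F × Matrix β κ F |
        (Matrix.fromRows X.1 X.2.1).rank = Fintype.card κ ∧
          (Matrix.fromRows X.1 X.2.2).rank = Fintype.card κ} : ℝ) /
      Fintype.card (Matrix ι κ F × Matrix α κ F × Matrix β κ F) =
    P2 (Fintype.card F) (Fintype.card κ) (Fintype.card ι + Fintype.card α)
      (Fintype.card ι + Fintype.card β) (Fintype.card ι) := by
  have hcount := card_sup_span_eq_top_and_sup_span_eq_top F (κ → F) ι α β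
  rw [finrank_fintype_fun_eq_card] at hcount
  simp only [rank_fromRows_eq_card_iff]
  rw [div_eq_iff (Nat.cast_ne_zero.2 Fintype.card_ne_zero), mul_comm,
    ← Nat.subtype_card _ fun _ => mem_filter_univ _,
    ← Nat.card_eq_fintype_card (α := Matrix ι κ F × Matrix α κ F × Matrix β κ F)]
  exact hcount

/-- `S`, `A1`, `A2` independent uniformly random matrices over a finite
field with `q` elements, of sizes `m12 × K`, `(m1-m12) × K`, `(m2-m12) × K`; with
`X1 = [S; A1]` and `X2 = [S; A2]`, the probability that both `X1` and `X2` have rank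
`K` equals `P2((m1,m2,m12),K)`. -/
theorem joint_full_rank_prob (q : ℕ) (F : Type) [Field F] [Fintype F] [DecidableEq F]
    (hF : Fintype.card F = q) (K m1 m2 m12 : ℕ)
    (h1 : K ≤ m1) (h2 : K ≤ m2) (h12 : m12 ≤ min m1 m2) :
    ((Finset.univ.filter
        (fun X : Matrix (Fin m12) (Fin K) F × Matrix (Fin (m1 - m12)) (Fin K) F ×
            Matrix (Fin (m2 - m12)) (Fin K) F =>
          (Matrix.fromRows X.1 X.2.1).rank = K ∧
          (Matrix.fromRows X.1 X.2.2).rank = K)).card : ℝ) /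
      (Fintype.card (Matrix (Fin m12) (Fin K) F × Matrix (Fin (m1 - m12)) (Fin K) F ×
        Matrix (Fin (m2 - m12)) (Fin K) F) : ℝ) =
    P2 q K m1 m2 m12 := by
  subst hF
  obtain ⟨h1', h2'⟩ := le_min_iff.1 h12
  simpa [Nat.add_sub_cancel' h1', Nat.add_sub_cancel' h2'] using
    joint_full_rank_prob_general F (Fin m12) (Fin (m1 - m12)) (Fin (m2 - m12)) (Fin K)
end

section
/- In the RF single-relay model (L = 1, with relay erasure probabilities ε_SR and ε_RD), the probability of successful decoding equals ∑ α(m, m_D, m_RD) · ∑_{m' = max(0, K−m_D)}^{N_R} B(m', N_R, ε_RD) · P2((m' + m_D, m − m_RD + m_D, m_D), K), where α(m, m_D, m_RD) = C(N_S, m_RD) · C(N_S − m_RD, m − m_RD) · C(N_S − m, m_D − m_RD) · (1−ε_SR)^m ε_SR^{N_S−m} (1−ε_SD)^{m_D} ε_SD^{N_S−m_D}, and the outer sum is over integers m, m_D with 0 ≤ m, m_D ≤ N_S and m + m_D ≥ K, and m_RD with max(0, m + m_D − N_S) ≤ m_RD ≤ min(m, m_D). -/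
open Finset

/-- Binomial probability `B(m,N,ε) = C(N,m) (1-ε)^m ε^{N-m}`. -/
noncomputable def Bpmf (m N : ℕ) (ε : ℝ) : ℝ :=
  (N.choose m : ℝ) * (1 - ε) ^ m * ε ^ (N - m)

/-- The multinomial factor `α(m, m_D, m_RD)` of the RF single-relay model. -/
noncomputable def alphaRF (NS : ℕ) (εSR εSD : ℝ) (m mD mRD : ℕ) : ℝ :=
  (NS.choose mRD : ℝ) * ((NS - mRD).choose (m - mRD) : ℝ) *
    ((NS - m).choose (mD - mRD) : ℝ) *
    (1 - εSR) ^ m * εSR ^ (NS - m) * (1 - εSD) ^ mD * εSD ^ (NS - mD)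

/-!
Fix the erasure patterns: the destination receives the source packets in `B` and `#D` recoded
packets, the relay holds the source packets in `A`. Let `W` be the span of the packets in `B`.
Modulo `W` the relay holds exactly the packets in `A \ B`, which are independent of `W`; if they
span the quotient by `W`, then the recoded packets are uniformly random there, and otherwise
decoding is impossible. So, given `finrank W = i`, decoding is the conjunction of two events: `#D`
and `#(A \ B)` uniform vectors each span a space of dimension `K - i`. This produces the two factors
`Pfr` in `P2`, while `Prk` is the law of `finrank W`, computed as a Markov chain in the number of
packets. Averaging over the erasure patterns only involves the cardinalities of `A`, `B`, `B ∩ A`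
and `D`.
-/

open Function Module Submodule
open scoped BigOperators

section RankLaw

variable {q : ℕ} {m K r : ℕ}

lemma Pfr_eq_zero (h : m < K) : Pfr q m K = 0 :=
  prod_eq_zero (mem_range.2 h) (by simp)

lemma Pfr_succ_succ (q m K : ℕ) :
    Pfr q (m + 1) (K + 1) = Pfr q m K * (1 - (q : ℝ) ^ (-((m + 1 : ℕ) : ℤ))) := by
  simp only [Pfr, prod_range_succ', Nat.cast_add_one, add_sub_add_right_eq_sub, Nat.cast_zero,
    zero_sub]

lemma gaussBinom_self (hq : 1 < q) (K : ℕ) : gaussBinom q K K = 1 :=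
  prod_eq_one fun i hi => div_self <| sub_ne_zero.2 <| ne_of_gt <|
    one_lt_pow₀ (by exact_mod_cast hq) (Nat.sub_ne_zero_of_lt (mem_range.1 hi))

lemma gaussBinom_succ_mul (hq : 1 < q) (K r : ℕ) :
    gaussBinom q K (r + 1) * ((q : ℝ) ^ (r + 1) - 1) =
      gaussBinom q K r * ((q : ℝ) ^ (K - r) - 1) := by
  have hr : (q : ℝ) ^ (r + 1) - 1 ≠ 0 :=
    sub_ne_zero.2 (one_lt_pow₀ (by exact_mod_cast hq) r.succ_ne_zero).ne'
  simp only [gaussBinom, prod_div_distrib]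
  rw [prod_range_succ, prod_range_succ' fun i => (q : ℝ) ^ (r + 1 - i) - 1]
  simp only [Nat.add_sub_add_right, Nat.sub_zero]
  rw [mul_div_mul_comm, mul_assoc, div_mul_cancel₀ _ hr]

lemma Prk_eq_mul_Pfr (q m K r : ℕ) :
    Prk q m K r = (q : ℝ) ^ (-(m : ℤ) * ((K : ℤ) - r)) * gaussBinom q K r * Pfr q m r :=
  rfl

lemma Prk_eq_zero (h : m < r) : Prk q m K r = 0 := by
  rw [Prk_eq_mul_Pfr, Pfr_eq_zero h, mul_zero]

lemma Prk_zero_zero (q K : ℕ) : Prk q 0 K 0 = 1 := by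
  simp [Prk, gaussBinom]

lemma Prk_self (hq : 1 < q) (m K : ℕ) : Prk q m K K = Pfr q m K := by
  simp [Prk_eq_mul_Pfr, gaussBinom_self hq]

lemma Prk_succ_zero (hq : q ≠ 0) (m K : ℕ) :
    Prk q (m + 1) K 0 = Prk q m K 0 * (q : ℝ) ^ (-(K : ℤ)) := by
  have hq0 : (q : ℝ) ≠ 0 := by exact_mod_cast hq
  simp only [Prk_eq_mul_Pfr, gaussBinom, Pfr, range_zero, prod_empty, mul_one]
  rw [← zpow_add₀ hq0]
  push_cast
  ring_nf

-- After cancelling the common factor `q ^ (-(m+1)(K-r-1)) * Pfr q m r`, this is the recursion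
-- `[K; r+1] (q ^ (r+1) - 1) = [K; r] (q ^ (K-r) - 1)` multiplied by `q ^ (-m-1)`.
lemma Prk_succ_succ (hq : 1 < q) (m : ℕ) (hr : r ≤ K) :
    Prk q (m + 1) K (r + 1) =
      Prk q m K (r + 1) * (q : ℝ) ^ (((r + 1 : ℕ) : ℤ) - K) +
        Prk q m K r * (1 - (q : ℝ) ^ ((r : ℤ) - K)) := by
  have hq0 : (q : ℝ) ≠ 0 := by positivity
  obtain ⟨d, rfl⟩ := Nat.exists_eq_add_of_le hr
  have hG := gaussBinom_succ_mul hq (r + d) r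
  have hP : Pfr q m (r + 1) = Pfr q m r * (1 - (q : ℝ) ^ ((r : ℤ) - m)) := prod_range_succ _ _
  simp only [Prk_eq_mul_Pfr, Pfr_succ_succ, hP]
  rw [Nat.add_sub_cancel_left] at hG
  simp only [Nat.cast_add, Nat.cast_one, add_sub_add_left_eq_sub, add_sub_cancel_left,
    sub_add_cancel_left, neg_mul, neg_add, add_mul, one_mul, mul_sub, mul_one, zpow_add₀ hq0,
    zpow_sub₀ hq0, zpow_neg, zpow_natCast, zpow_one]
  field_simp
  linear_combination Pfr q m r * hG

lemma sum_Prk_succ_mul (hq : 1 < q) (m K : ℕ) (h : ℕ → ℝ) :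
    ∑ i ∈ range (K + 1), Prk q (m + 1) K i * h i =
      ∑ i ∈ range (K + 1), Prk q m K i *
        ((q : ℝ) ^ ((i : ℤ) - K) * h i + (1 - (q : ℝ) ^ ((i : ℤ) - K)) * h (i + 1)) := by
  have hstay : ∑ i ∈ range (K + 1), Prk q m K i * (q : ℝ) ^ ((i : ℤ) - K) * h i =
      ∑ i ∈ range K, Prk q m K (i + 1) * (q : ℝ) ^ (((i + 1 : ℕ) : ℤ) - K) * h (i + 1) +
        Prk q m K 0 * (q : ℝ) ^ (-(K : ℤ)) * h 0 := by
    rw [sum_range_succ', Nat.cast_zero, zero_sub]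
  have hgrow : ∑ i ∈ range (K + 1), Prk q m K i * (1 - (q : ℝ) ^ ((i : ℤ) - K)) * h (i + 1) =
      ∑ i ∈ range K, Prk q m K i * (1 - (q : ℝ) ^ ((i : ℤ) - K)) * h (i + 1) := by
    rw [sum_range_succ, sub_self, zpow_zero, sub_self, mul_zero, zero_mul, add_zero]
  simp only [mul_add, sum_add_distrib, ← mul_assoc]
  rw [hstay, hgrow, add_right_comm, ← sum_add_distrib, sum_range_succ',
    Prk_succ_zero (by lia)]
  congr 1
  refine sum_congr rfl fun i hi => ?_
  rw [Prk_succ_succ hq m (mem_range.1 hi).le, add_mul]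

lemma P2_eq_sum_range (q K m₁ m₂ m₁₂ : ℕ) :
    P2 q K (m₁ + m₁₂) (m₂ + m₁₂) m₁₂ =
      ∑ i ∈ range (K + 1), Prk q m₁₂ K i * (Pfr q m₁ (K - i) * Pfr q m₂ (K - i)) := by
  simp only [P2, Nat.add_sub_cancel, mul_assoc]
  refine sum_subset (fun i hi => ?_) fun i _ hi => ?_
  · simp only [mem_Icc, mem_range] at hi ⊢
    lia
  · have hcases : m₁₂ < i ∨ m₁ < K - i ∨ m₂ < K - i := by
      simp only [mem_Icc, mem_range] at *
      lia
    obtain h | h | h := hcases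
    · rw [Prk_eq_zero h, zero_mul]
    · rw [Pfr_eq_zero h, zero_mul, mul_zero]
    · rw [Pfr_eq_zero h, mul_zero, mul_zero]

lemma P2_eq_zero {m₁ m₂ m₁₂ : ℕ} (h : m₁ < K ∨ m₂ < K) : P2 q K m₁ m₂ m₁₂ = 0 := by
  rw [P2, Icc_eq_empty (by lia), sum_empty]

end RankLaw

section UniformDistribution

lemma expect_comp_surjective {A B : Type*} [AddGroup A] [AddGroup B] [Fintype A] [Fintype B]
    {φ : A →+ B} (hφ : Surjective φ) (f : B → ℝ) : 𝔼 a, f (φ a) = 𝔼 b, f b := by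
  classical
  have hfiber (b : B) : #{a | φ a = b} = #{a | φ a = 0} :=
    AddMonoidHom.card_fiber_eq_of_mem_range φ (hφ b) (hφ 0)
  have hsum (g : B → ℝ) : ∑ a, g (φ a) = #{a | φ a = 0} * ∑ b, g b := by
    simp only [← sum_fiberwise' univ φ g, sum_const, hfiber, nsmul_eq_mul, mul_sum]
  have hcard : (Fintype.card A : ℝ) = #{a | φ a = 0} * Fintype.card B := by
    simpa using hsum 1
  have hker : (#{a | φ a = 0} : ℝ) ≠ 0 :=
    left_ne_zero_of_mul (hcard ▸ Nat.cast_ne_zero.2 Fintype.card_ne_zero)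
  rw [Fintype.expect_eq_sum_div_card, Fintype.expect_eq_sum_div_card, hsum, hcard,
    mul_div_mul_left _ _ hker]

variable {ι V : Type*} [Fintype ι] [DecidableEq ι] [AddGroup V] [Fintype V]

lemma expect_comp_injective {κ : Type*} [Fintype κ] [DecidableEq κ] {e : κ → ι}
    (he : Injective e) (f : (κ → V) → ℝ) : 𝔼 x : ι → V, f (x ∘ e) = 𝔼 y, f y :=
  let precomp : (ι → V) →+ (κ → V) := ⟨⟨(· ∘ e), rfl⟩, fun _ _ => rfl⟩
  expect_comp_surjective (φ := precomp) he.surjective_comp_right f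

lemma expect_restrict_disjoint {s t : Finset ι} (hst : Disjoint s t)
    (f : (s → V) → (t → V) → ℝ) :
    𝔼 x : ι → V, f (s.restrict x) (t.restrict x) = 𝔼 y, 𝔼 z, f y z := by
  have hinj : Injective (Sum.elim ((↑) : s → ι) ((↑) : t → ι)) :=
    Subtype.val_injective.sumElim Subtype.val_injective
      fun i j => ne_of_mem_of_not_mem i.2 (disjoint_right.1 hst j.2)
  calc
    _ = 𝔼 y : s ⊕ t → V, f (y ∘ Sum.inl) (y ∘ Sum.inr) :=
      expect_comp_injective hinj fun y => f (y ∘ Sum.inl) (y ∘ Sum.inr)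
    _ = 𝔼 p : (s → V) × (t → V), f p.1 p.2 :=
      Fintype.expect_equiv (Equiv.sumArrowEquivProdArrow s t V) _ _ fun _ => rfl
    _ = _ := by rw [← univ_product_univ, expect_product]

lemma sum_filter_mul_eq_sum_expect {𝒞 β α 𝒢 δ : Type*} [Fintype 𝒞] [Fintype β] [Fintype α]
    [Fintype 𝒢] [Fintype δ] (p : 𝒞 × β × α × 𝒢 × δ → Prop) [DecidablePred p]
    (u : β → ℝ) (v : α → ℝ) (w : δ → ℝ) :
    ∑ ω with p ω, (Fintype.card 𝒞 : ℝ)⁻¹ * (Fintype.card 𝒢 : ℝ)⁻¹ * u ω.2.1 * v ω.2.2.1 *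
        w ω.2.2.2.2 =
      ∑ a, ∑ b, v a * u b * ∑ d, w d * 𝔼 C, 𝔼 G, if p (C, b, a, G, d) then (1 : ℝ) else 0 := by
  simp only [Fintype.expect_eq_sum_div_card, div_eq_inv_mul, mul_sum, sum_filter,
    ← Fintype.sum_prod_type']
  refine Fintype.sum_equiv ⟨fun (C, b, a, G, d) => (a, b, d, C, G),
    fun (a, b, d, C, G) => (C, b, a, G, d), fun _ => rfl, fun _ => rfl⟩ _ _
    fun ⟨C, b, a, G, d⟩ => ?_
  simp only [Equiv.coe_fn_mk]
  split_ifs <;> ring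

end UniformDistribution

section RandomSpan

variable {F V : Type*} [Field F] [Fintype F] [AddCommGroup V] [Module F V]

variable {ι : Type*} [Fintype ι] [DecidableEq ι]

section Fintype

variable [Fintype V]

lemma expect_finrank_sup_span_singleton (W : Submodule F V) (h : ℕ → ℝ) :
    𝔼 v : V, h (finrank F (W ⊔ span F {v} : Submodule F V)) =
      (Fintype.card F : ℝ) ^ ((finrank F W : ℤ) - finrank F V) * h (finrank F W) +
        (1 - (Fintype.card F : ℝ) ^ ((finrank F W : ℤ) - finrank F V)) *
          h (finrank F W + 1) := by
  classical
  have hF : (Fintype.card F : ℝ) ≠ 0 := Nat.cast_ne_zero.2 Fintype.card_ne_zero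
  have hdens : (#{v | v ∈ W} : ℝ) / Fintype.card V =
      (Fintype.card F : ℝ) ^ ((finrank F W : ℤ) - finrank F V) := by
    rw [← Fintype.card_subtype, zpow_sub₀ hF, zpow_natCast, zpow_natCast]
    exact_mod_cast congrArg₂ (fun a b : ℕ => (a / b : ℝ))
      (card_eq_pow_finrank (K := F) (V := W)) (card_eq_pow_finrank (K := F) (V := V))
  have hstep (v : V) : h (finrank F (W ⊔ span F {v} : Submodule F V)) =
      (if v ∈ W then h (finrank F W) - h (finrank F W + 1) else 0) + h (finrank F W + 1) := by
    split_ifs with hv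
    · rw [sup_eq_left.2 ((span_singleton_le_iff_mem v W).2 hv), sub_add_cancel]
    · rw [finrank_sup_span_singleton hv, zero_add]
  simp only [hstep, expect_add_distrib, Fintype.expect_const]
  rw [Fintype.expect_eq_sum_div_card, ← sum_filter, sum_const, nsmul_eq_mul, ← hdens]
  ring

lemma expect_finrank_span_range_fin (m : ℕ) (h : ℕ → ℝ) :
    𝔼 c : Fin m → V, h (finrank F (span F (Set.range c))) =
      ∑ i ∈ range (finrank F V + 1), Prk (Fintype.card F) m (finrank F V) i * h i := by
  induction m generalizing h with
  | zero =>
    have hspan (c : Fin 0 → V) : finrank F (span F (Set.range c)) = 0 := by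
      rw [Set.range_eq_empty, span_empty, finrank_bot]
    simp only [hspan, Fintype.expect_const]
    rw [sum_eq_single_of_mem 0 (by simp)
      fun i _ hi => by rw [Prk_eq_zero (Nat.pos_of_ne_zero hi), zero_mul], Prk_zero_zero, one_mul]
  | succ m ih =>
    rw [sum_Prk_succ_mul Fintype.one_lt_card, ← ih]
    calc
      _ = 𝔼 p : V × (Fin m → V),
          h (finrank F (span F (Set.range (Fin.cons p.1 p.2 : Fin (m + 1) → V)))) :=
        (Fintype.expect_equiv (Fin.consEquiv fun _ : Fin (m + 1) => V) _ _ fun _ => rfl).symm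
      _ = 𝔼 c : Fin m → V, 𝔼 v : V,
          h (finrank F (span F (Set.range c) ⊔ span F {v} : Submodule F V)) := by
        rw [← univ_product_univ, expect_product, expect_comm]
        refine expect_congr rfl fun c _ => expect_congr rfl fun v _ => ?_
        rw [Fin.range_cons, span_insert, sup_comm]
      _ = _ := by simp only [expect_finrank_sup_span_singleton]

lemma expect_finrank_span_range (h : ℕ → ℝ) :
    𝔼 c : ι → V, h (finrank F (span F (Set.range c))) =
      ∑ i ∈ range (finrank F V + 1),
        Prk (Fintype.card F) (Fintype.card ι) (finrank F V) i * h i := by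
  rw [← expect_finrank_span_range_fin]
  let e := Fintype.equivFin ι
  refine Fintype.expect_equiv (e.arrowCongr (Equiv.refl V)) _ _ fun c => ?_
  rw [show e.arrowCongr (Equiv.refl V) c = c ∘ e.symm from rfl, e.symm.surjective.range_comp c]

open scoped Classical in
lemma expect_span_range_eq_top :
    𝔼 c : ι → V, (if span F (Set.range c) = ⊤ then (1 : ℝ) else 0) =
      Pfr (Fintype.card F) (Fintype.card ι) (finrank F V) := by
  simp only [eq_top_iff_finrank_eq]
  rw [expect_finrank_span_range fun r => if r = finrank F V then (1 : ℝ) else 0]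
  simp only [mul_ite, mul_one, mul_zero, sum_ite_eq', mem_range, Nat.lt_succ_self, if_true,
    Prk_self Fintype.one_lt_card]

end Fintype

/- A uniformly random family in `M` is pushed by `M → V → V ⧸ W` to a uniformly random family in
`V ⧸ W` as soon as this composite is surjective; otherwise spanning is impossible. -/
open scoped Classical in
lemma expect_sup_span_range_map_eq_top {M : Type*} [AddCommGroup M] [Module F M] [Fintype M]
    [Module.Finite F V] (W : Submodule F V) (φ : M →ₗ[F] V) :
    𝔼 x : ι → M, (if W ⊔ span F (Set.range fun i => φ (x i)) = ⊤ then (1 : ℝ) else 0) =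
      (if W ⊔ φ.range = ⊤ then 1 else 0) *
        Pfr (Fintype.card F) (Fintype.card ι) (finrank F V - finrank F W) := by
  by_cases h : W ⊔ φ.range = ⊤
  · let ψ : M →ₗ[F] V ⧸ W := W.mkQ ∘ₗ φ
    have hψ : Surjective ψ := by
      rw [← LinearMap.range_eq_top, LinearMap.range_comp, map_mkQ_eq_top, h]
    have hspan (x : ι → M) : W ⊔ span F (Set.range fun i => φ (x i)) = ⊤ ↔
        span F (Set.range (ψ ∘ x)) = ⊤ := by
      rw [← map_mkQ_eq_top, map_span, ← Set.range_comp]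
      rfl
    have := Fintype.ofSurjective ψ hψ
    rw [if_pos h, one_mul, ← finrank_quotient, ← expect_span_range_eq_top]
    simp only [hspan]
    exact expect_comp_surjective (φ := ψ.toAddMonoidHom.compLeft ι) hψ.comp_left
      fun y => if span F (Set.range y) = ⊤ then (1 : ℝ) else 0
  · rw [if_neg h, zero_mul]
    refine expect_eq_zero fun x _ => if_neg fun hx => h (top_unique ?_)
    rw [← hx]
    refine sup_le_sup_left (span_le.2 ?_) W
    rintro _ ⟨i, rfl⟩
    exact φ.mem_range_self (x i)

open scoped Classical in
lemma expect_sup_span_range_eq_top [Fintype V] (W : Submodule F V) :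
    𝔼 x : ι → V, (if W ⊔ span F (Set.range x) = ⊤ then (1 : ℝ) else 0) =
      Pfr (Fintype.card F) (Fintype.card ι) (finrank F V - finrank F W) := by
  simpa only [LinearMap.id_apply, LinearMap.range_id, sup_top_eq, if_true, one_mul] using
    expect_sup_span_range_map_eq_top (ι := ι) W LinearMap.id

end RandomSpan

section DestinationSpan

variable {F R T V : Type*} [Field F] [AddCommGroup V] [Module F V]

/-- The encoder of a relay holding the packets `c i`, `i ∈ A`: it sends a coefficient vector `g` to
the recoded packet `∑ i ∈ A, g i • c i`. The coefficients outside `A` are ignored, so that the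
coefficient space does not depend on what the relay has received. -/
def recode (F : Type*) [Field F] [Module F V] (A : Finset R) (c : R → V) : (R → F) →ₗ[F] V :=
  Fintype.linearCombination F (A.restrict c) ∘ₗ LinearMap.funLeft F F ((↑) : A → R)

lemma recode_apply (A : Finset R) (c : R → V) (g : R → F) :
    recode F A c g = ∑ i : A, g i • c i :=
  rfl

lemma range_recode (A : Finset R) (c : R → V) :
    (recode F A c).range = span F (Set.range (A.restrict c)) := by
  rw [recode, LinearMap.range_comp_of_range_eq_top _ (LinearMap.range_eq_top.2 <|
    LinearMap.funLeft_surjective_of_injective F F _ Subtype.val_injective),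
    Fintype.range_linearCombination]

/-- The space of packets known to the destination when it receives the source packets in `B` and
the recoded packets in `D`, from a relay holding the source packets in `A`. -/
def destSpan (B A : Finset R) (D : Finset T) (c : R → V) (g : T → R → F) : Submodule F V :=
  span F (Set.range (B.restrict c)) ⊔ span F (Set.range fun t : D => recode F A c (g t))

lemma span_restrict_sup_span_restrict_sdiff [DecidableEq R] (B A : Finset R) (c : R → V) :
    span F (Set.range (B.restrict c)) ⊔ span F (Set.range ((A \ B).restrict c)) =
      span F (Set.range (B.restrict c)) ⊔ span F (Set.range (A.restrict c)) := by
  have himage (s : Finset R) : Set.range (s.restrict c) = c '' s := Set.image_eq_range c s |>.symm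
  simp only [← span_union, himage, ← Set.image_union, ← coe_union, union_sdiff_self_eq_union]

variable [Fintype F] [Fintype R] [DecidableEq R] [Fintype T] [DecidableEq T]

open scoped Classical in
lemma expect_destSpan_eq_top_of_source [Module.Finite F V] (B A : Finset R) (D : Finset T)
    (c : R → V) :
    𝔼 g : T → R → F, (if destSpan B A D c g = ⊤ then (1 : ℝ) else 0) =
      (if span F (Set.range (B.restrict c)) ⊔ span F (Set.range ((A \ B).restrict c)) = ⊤
        then 1 else 0) *
        Pfr (Fintype.card F) #D (finrank F V - finrank F (span F (Set.range (B.restrict c)))) := by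
  rw [span_restrict_sup_span_restrict_sdiff, ← range_recode A, ← Fintype.card_coe D,
    ← expect_sup_span_range_map_eq_top]
  exact expect_comp_injective Subtype.val_injective fun g : D → R → F =>
    if span F (Set.range (B.restrict c)) ⊔ span F (Set.range fun t => recode F A c (g t)) = ⊤
      then (1 : ℝ) else 0

/- Conditionally on the source packets in `B`, two independent events must happen: the packets in
`A \ B` and the packets recoded by the relay must both span the quotient by the packets in `B`. -/
open scoped Classical in
lemma expect_destSpan_eq_top [Fintype V] (B A : Finset R) (D : Finset T) :
    𝔼 c : R → V, 𝔼 g : T → R → F, (if destSpan B A D c g = ⊤ then (1 : ℝ) else 0) =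
      P2 (Fintype.card F) (finrank F V) (#D + #B) (#(A \ B) + #B) #B := by
  let W (y : B → V) : Submodule F V := span F (Set.range y)
  let pD (r : ℕ) : ℝ := Pfr (Fintype.card F) #D (finrank F V - r)
  let pA (r : ℕ) : ℝ := Pfr (Fintype.card F) #(A \ B) (finrank F V - r)
  have hrelay (y : B → V) :
      𝔼 z : ↥(A \ B) → V, (if W y ⊔ span F (Set.range z) = ⊤ then (1 : ℝ) else 0) =
        pA (finrank F (W y)) := by
    rw [expect_sup_span_range_eq_top, Fintype.card_coe]
  calc
    _ = 𝔼 c : R → V, (if W (B.restrict c) ⊔ span F (Set.range ((A \ B).restrict c)) = ⊤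
          then 1 else 0) * pD (finrank F (W (B.restrict c))) :=
      expect_congr rfl fun c _ => expect_destSpan_eq_top_of_source B A D c
    _ = 𝔼 y : B → V, 𝔼 z : ↥(A \ B) → V,
          (if W y ⊔ span F (Set.range z) = ⊤ then 1 else 0) * pD (finrank F (W y)) :=
      expect_restrict_disjoint disjoint_sdiff fun y z =>
        (if W y ⊔ span F (Set.range z) = ⊤ then 1 else 0) * pD (finrank F (W y))
    _ = 𝔼 y : B → V, pD (finrank F (W y)) * pA (finrank F (W y)) := by
      simp only [← expect_mul, hrelay, mul_comm (pA _)]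
    _ = _ := by
      rw [expect_finrank_span_range (fun r => pD r * pA r), Fintype.card_coe, P2_eq_sum_range]

end DestinationSpan

section DestinationMatrix

/-- The set of packets that survive the erasure pattern `b`, where `b i = true` means that packet
`i` is received. -/
def received {ι : Type*} [Fintype ι] (b : ι → Bool) : Finset ι :=
  {i | b i = true}

lemma mem_received {ι : Type*} [Fintype ι] {b : ι → Bool} {i : ι} :
    i ∈ received b ↔ b i = true := by
  simp [received]

lemma received_bijective (ι : Type*) [Fintype ι] :
    Bijective (received : (ι → Bool) → Finset ι) := by
  classical
  exact bijective_iff_has_inverse.2 ⟨fun s i => decide (i ∈ s), fun b => by simp [received],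
    fun s => by simp [received]⟩

variable {F R T κ : Type*} [Field F] [Fintype R] [Fintype T]

/-- The coefficient matrix of the destination: the rows of `C` received from the source, stacked on
the received rows of the relay's recoding matrix `G` times the rows of `C` held by the relay. -/
def destMatrix (b a : R → Bool) (d : T → Bool) (C : Matrix R κ F) (G : Matrix T R F) :
    Matrix ({i // b i = true} ⊕ {t // d t = true}) κ F :=
  Matrix.of (Sum.elim (fun i k => C i.1 k)
    fun t k => ∑ i : {i : R // a i = true}, G t.1 i.1 * C i.1 k)

lemma rank_destMatrix [Fintype κ] (b a : R → Bool) (d : T → Bool) (C : Matrix R κ F)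
    (G : Matrix T R F) :
    (destMatrix b a d C G).rank =
      finrank F (destSpan (received b) (received a) (received d) C.row G.row) := by
  have hsource : Set.range (fun i : {i // b i = true} => C.row i) =
      Set.range ((received b).restrict C.row) := by
    ext; simp [mem_received]
  have hrecode (t : T) : (fun k => ∑ i : {i : R // a i = true}, G t i * C i k) =
      recode F (received a) C.row (G.row t) := by
    ext k
    rw [recode_apply, sum_coe_sort (received a) fun i => G.row t i • C.row i, Finset.sum_apply,
      sum_subtype _ fun _ => mem_received]
    rfl
  have hrelay : Set.range (fun (t : {t // d t = true}) k =>
      ∑ i : {i // a i = true}, G t i * C i k) =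
      Set.range fun t : received d => recode F (received a) C.row (G.row t) := by
    ext; simp [mem_received, hrecode]
  have hspan : destSpan (received b) (received a) (received d) C.row G.row =
      span F (Set.range (destMatrix b a d C G).row) := by
    rw [destSpan, ← hsource, ← hrelay, ← span_union, ← Set.Sum.elim_range]
    rfl
  rw [Matrix.rank_eq_finrank_span_row, hspan]

lemma expect_rank_destMatrix [Fintype F] [Fintype κ] [DecidableEq R] [DecidableEq T]
    [DecidableEq κ] (b a : R → Bool) (d : T → Bool) :
    𝔼 C : Matrix R κ F, 𝔼 G : Matrix T R F,
        (if (destMatrix b a d C G).rank = Fintype.card κ then (1 : ℝ) else 0) =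
      P2 (Fintype.card F) (Fintype.card κ) (#(received d) + #(received b))
        (#(received a \ received b) + #(received b)) #(received b) := by
  classical
  have hrank (C : Matrix R κ F) (G : Matrix T R F) :
      (destMatrix b a d C G).rank = Fintype.card κ ↔
        destSpan (received b) (received a) (received d) C.row G.row = ⊤ := by
    rw [rank_destMatrix, ← finrank_fintype_fun_eq_card F, eq_top_iff_finrank_eq]
  simp only [hrank]
  rw [← finrank_fintype_fun_eq_card F (η := κ)]
  exact expect_destSpan_eq_top (received b) (received a) (received d)

lemma sum_filter_rank_destMatrix [Fintype F] [Fintype κ] [DecidableEq R] [DecidableEq T]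
    [DecidableEq κ] (u v : Finset R → ℝ) (w : Finset T → ℝ) :
    ∑ ω : Matrix R κ F × (R → Bool) × (R → Bool) × Matrix T R F × (T → Bool) with
        (destMatrix ω.2.1 ω.2.2.1 ω.2.2.2.2 ω.1 ω.2.2.2.1).rank = Fintype.card κ,
      (Fintype.card (Matrix R κ F) : ℝ)⁻¹ * (Fintype.card (Matrix T R F) : ℝ)⁻¹ *
        u (received ω.2.1) * v (received ω.2.2.1) * w (received ω.2.2.2.2) =
      ∑ A, ∑ B, v A * u B * ∑ D, w D *
        P2 (Fintype.card F) (Fintype.card κ) (#D + #B) (#(A \ B) + #B) #B := by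
  rw [sum_filter_mul_eq_sum_expect _ (fun b => u (received b)) (fun a => v (received a))
    fun d => w (received d)]
  simp only [expect_rank_destMatrix]
  simp only [← (received_bijective R).sum_comp, ← (received_bijective T).sum_comp]

end DestinationMatrix

section ErasurePatterns

variable {ι : Type*} [Fintype ι]

/-- The probability that the set of packets received over a channel with independent erasures of
probability `ε` is exactly `s`. -/
def erasureWeight (ε : ℝ) (s : Finset ι) : ℝ :=
  (1 - ε) ^ #s * ε ^ (Fintype.card ι - #s)

lemma prod_ite_eq_erasureWeight (ε : ℝ) (b : ι → Bool) :
    ∏ i, (if b i = true then 1 - ε else ε) = erasureWeight ε (received b) := by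
  classical
  rw [prod_ite, prod_const, prod_const, filter_not, ← compl_eq_univ_sdiff, card_compl]
  rfl

lemma sum_erasureWeight_mul (ε : ℝ) (f : ℕ → ℝ) :
    ∑ s : Finset ι, erasureWeight ε s * f #s =
      ∑ j ∈ range (Fintype.card ι + 1), Bpmf j (Fintype.card ι) ε * f j := by
  have hsum := sum_powerset_apply_card (x := (univ : Finset ι))
    fun j => (1 - ε) ^ j * ε ^ (Fintype.card ι - j) * f j
  simpa only [erasureWeight, Bpmf, nsmul_eq_mul, mul_assoc, card_univ, powerset_univ] using hsum

lemma sum_erasureWeight_mul_P2 (ε : ℝ) (q K n s : ℕ) :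
    ∑ D : Finset ι, erasureWeight ε D * P2 q K (#D + n) s n =
      ∑ j ∈ Icc (K - n) (Fintype.card ι), Bpmf j (Fintype.card ι) ε * P2 q K (j + n) s n := by
  rw [sum_erasureWeight_mul ε fun j => P2 q K (j + n) s n]
  refine (sum_subset (fun j hj => ?_) fun j hj hj' => ?_).symm
  · exact mem_range_succ_iff.2 (mem_Icc.1 hj).2
  · rw [P2_eq_zero (Or.inl ?_), mul_zero]
    simp only [mem_range, mem_Icc] at hj hj'
    lia

variable [DecidableEq ι]

lemma card_filter_card_eq_and_card_inter_eq (A : Finset ι) {n j : ℕ} (hj : j ≤ n) :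
    #{B : Finset ι | #B = n ∧ #(B ∩ A) = j} =
      (#A).choose j * (Fintype.card ι - #A).choose (n - j) := by
  rw [← card_compl, ← card_powersetCard, ← card_powersetCard, ← card_product]
  have hsplit {X Y : Finset ι} (hX : X ⊆ A) (hY : Y ⊆ Aᶜ) :
      (X ∪ Y) ∩ A = X ∧ (X ∪ Y) \ A = Y := by
    grind [mem_compl]
  refine card_bij' (fun B _ => (B ∩ A, B \ A)) (fun p _ => p.1 ∪ p.2) (fun B hB => ?_) ?_
    (fun B _ => sup_inf_sdiff B A) ?_
  · obtain ⟨rfl, rfl⟩ : #B = n ∧ #(B ∩ A) = j := by simpa using hB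
    have hsdiff : B \ A ⊆ Aᶜ := sdiff_eq (x := B) ▸ inf_le_right
    have hcard := card_inter_add_card_sdiff B A
    exact mem_product.2 ⟨mem_powersetCard.2 ⟨inter_subset_right, rfl⟩,
      mem_powersetCard.2 ⟨hsdiff, by lia⟩⟩
  · rintro ⟨X, Y⟩ hXY
    obtain ⟨⟨hX, rfl⟩, hY, hYcard⟩ : (X ⊆ A ∧ #X = j) ∧ Y ⊆ Aᶜ ∧ #Y = n - j := by
      simpa using hXY
    have hunion := card_inter_add_card_sdiff (X ∪ Y) A
    simp only [hsplit hX hY] at hunion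
    simp only [mem_filter_univ, hsplit hX hY]
    lia
  · rintro ⟨X, Y⟩ hXY
    obtain ⟨⟨hX, -⟩, hY, -⟩ : (X ⊆ A ∧ #X = j) ∧ Y ⊆ Aᶜ ∧ #Y = n - j := by simpa using hXY
    exact Prod.ext_iff.2 (hsplit hX hY)

lemma sum_card_card_inter (A : Finset ι) (f : ℕ → ℕ → ℝ) :
    ∑ B, f #B #(B ∩ A) = ∑ n ∈ range (Fintype.card ι + 1),
      ∑ j ∈ Icc (#A + n - Fintype.card ι) (min #A n),
        ((#A).choose j * (Fintype.card ι - #A).choose (n - j) : ℕ) * f n j := by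
  have hmaps (B : Finset ι) : (⟨#B, #(B ∩ A)⟩ : Σ _ : ℕ, ℕ) ∈
      (range (Fintype.card ι + 1)).sigma fun n =>
        Icc (#A + n - Fintype.card ι) (min #A n) := by
    have hunion := card_union_add_card_inter B A
    have hcard := card_le_univ (B ∪ A)
    simp only [mem_sigma, mem_range_succ_iff, mem_Icc, le_min_iff]
    exact ⟨card_le_univ B, by lia, card_le_card inter_subset_right,
      card_le_card inter_subset_left⟩
  rw [← sum_fiberwise_of_maps_to' (fun B _ => hmaps B) fun p => f p.1 p.2, sum_sigma]
  refine sum_congr rfl fun n _ => sum_congr rfl fun j hj => ?_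
  rw [sum_const, nsmul_eq_mul, ← card_filter_card_eq_and_card_inter_eq]
  · simp only [Sigma.mk.injEq, heq_eq_eq]
  · exact (mem_Icc.1 hj).2.trans (min_le_right _ _)

lemma sum_erasureWeight_mul_erasureWeight_mul (ε δ : ℝ) (f : ℕ → ℕ → ℕ → ℝ) :
    ∑ A : Finset ι, ∑ B : Finset ι,
        erasureWeight ε A * erasureWeight δ B * f #A #B #(B ∩ A) =
      ∑ m ∈ range (Fintype.card ι + 1), ∑ n ∈ range (Fintype.card ι + 1),
        ∑ j ∈ Icc (m + n - Fintype.card ι) (min m n),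
          alphaRF (Fintype.card ι) ε δ m n j * f m n j := by
  set N := Fintype.card ι
  let g (m : ℕ) : ℝ := ∑ n ∈ range (N + 1), ∑ j ∈ Icc (m + n - N) (min m n),
    (m.choose j * (N - m).choose (n - j) : ℕ) *
      ((1 - δ) ^ n * δ ^ (N - n) * f m n j)
  have hinner (A : Finset ι) :
      ∑ B : Finset ι, erasureWeight ε A * erasureWeight δ B * f #A #B #(B ∩ A) =
        erasureWeight ε A * g #A := by
    simp only [mul_assoc (erasureWeight ε A), ← mul_sum]
    exact congrArg _ (sum_card_card_inter A fun n j => (1 - δ) ^ n * δ ^ (N - n) * f #A n j)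
  simp only [hinner]
  rw [sum_erasureWeight_mul]
  refine sum_congr rfl fun m _ => ?_
  simp only [g, mul_sum]
  refine sum_congr rfl fun n _ => sum_congr rfl fun j hj => ?_
  have hchoose : (N.choose m * m.choose j : ℝ) = N.choose j * (N - j).choose (m - j) :=
    mod_cast Nat.choose_mul ((mem_Icc.1 hj).2.trans (min_le_left _ _))
  simp only [Bpmf, alphaRF, Nat.cast_mul]
  linear_combination (N - m).choose (n - j) * (1 - ε) ^ m * ε ^ (N - m) * (1 - δ) ^ n *
    δ ^ (N - n) * f m n j * hchoose

end ErasurePatterns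

/-- the RF single-relay model (`L = 1`). Sample space: `C` a uniformly
random `N_S × K` matrix over a finite field with `q` elements; `b` the destination
reception pattern from the source (row `i` received w.p. `1-ε_SD`); `a` the relay
reception pattern (w.p. `1-ε_SR`); `G` the relay recoding matrix (realised as a
uniformly random `N_R × N_S` matrix, only the columns of received packets being
used); `d` the destination reception pattern from the relay (w.p. `1-ε_RD`).
The destination matrix `C_D` stacks `C_B` and `(G)_D · C_A`; decoding succeeds iff
`rank C_D = K`. The probability of successful decoding equals
`∑ α(m,m_D,m_RD) ∑_{m'=max(0,K-m_D)}^{N_R} B(m',N_R,ε_RD) P2((m'+m_D, m-m_RD+m_D, m_D), K)`,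
the outer sum over `0 ≤ m, m_D ≤ N_S` with `m + m_D ≥ K` and
`max(0, m+m_D-N_S) ≤ m_RD ≤ min(m, m_D)`. -/
theorem rf_single_relay_decoding_prob (q : ℕ) (F : Type) [Field F] [Fintype F]
    [DecidableEq F] (hF : Fintype.card F = q) (K NS NR : ℕ) (hK : 1 ≤ K) (hNS : K ≤ NS)
    (εSD εSR εRD : ℝ) (hSD : εSD ∈ Set.Icc (0:ℝ) 1) (hSR : εSR ∈ Set.Icc (0:ℝ) 1)
    (hRD : εRD ∈ Set.Icc (0:ℝ) 1) :
    ∑ ω ∈ Finset.univ.filter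
        (fun ω : Matrix (Fin NS) (Fin K) F × (Fin NS → Bool) × (Fin NS → Bool) ×
            Matrix (Fin NR) (Fin NS) F × (Fin NR → Bool) =>
          ((Matrix.of (Sum.elim
              (fun (i : {i : Fin NS // ω.2.1 i = true}) (k : Fin K) => ω.1 i.1 k)
              (fun (t : {t : Fin NR // ω.2.2.2.2 t = true}) (k : Fin K) =>
                ∑ i : {i : Fin NS // ω.2.2.1 i = true},
                  ω.2.2.2.1 t.1 i.1 * ω.1 i.1 k))).rank = K)),
      ((Fintype.card (Matrix (Fin NS) (Fin K) F) : ℝ))⁻¹ *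
      ((Fintype.card (Matrix (Fin NR) (Fin NS) F) : ℝ))⁻¹ *
      (∏ i : Fin NS, (if ω.2.1 i then (1 - εSD) else εSD)) *
      (∏ i : Fin NS, (if ω.2.2.1 i then (1 - εSR) else εSR)) *
      (∏ t : Fin NR, (if ω.2.2.2.2 t then (1 - εRD) else εRD)) =
    ∑ m ∈ Finset.range (NS + 1), ∑ mD ∈ Finset.range (NS + 1),
      (if K ≤ m + mD then
        ∑ mRD ∈ Finset.Icc (m + mD - NS) (min m mD),
          alphaRF NS εSR εSD m mD mRD *
            ∑ m' ∈ Finset.Icc (K - mD) NR,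
              Bpmf m' NR εRD * P2 q K (m' + mD) (m - mRD + mD) mD
       else 0) := by
  subst hF
  let condProb (m mD mRD : ℕ) : ℝ := ∑ m' ∈ Icc (K - mD) NR,
    Bpmf m' NR εRD * P2 (Fintype.card F) K (m' + mD) (m - mRD + mD) mD
  calc
    _ = ∑ A : Finset (Fin NS), ∑ B : Finset (Fin NS), erasureWeight εSR A * erasureWeight εSD B *
          ∑ D : Finset (Fin NR), erasureWeight εRD D *
            P2 (Fintype.card F) K (#D + #B) (#(A \ B) + #B) #B := by
      simpa only [prod_ite_eq_erasureWeight, Fintype.card_fin, destMatrix] using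
        sum_filter_rank_destMatrix (F := F) (κ := Fin K)
          (erasureWeight εSD) (erasureWeight εSR) (erasureWeight εRD)
    _ = ∑ A : Finset (Fin NS), ∑ B : Finset (Fin NS),
          erasureWeight εSR A * erasureWeight εSD B * condProb #A #B #(B ∩ A) := by
      simp only [sum_erasureWeight_mul_P2, card_sdiff, Fintype.card_fin, condProb]
    _ = ∑ m ∈ range (NS + 1), ∑ mD ∈ range (NS + 1), ∑ mRD ∈ Icc (m + mD - NS) (min m mD),
          alphaRF NS εSR εSD m mD mRD * condProb m mD mRD := by
      simpa only [Fintype.card_fin] using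
        sum_erasureWeight_mul_erasureWeight_mul (ι := Fin NS) εSR εSD condProb
    _ = _ := by
      refine sum_congr rfl fun m _ => sum_congr rfl fun mD _ => ?_
      split_ifs with h
      · rfl
      · exact sum_eq_zero fun mRD _ => mul_eq_zero_of_right _ <| sum_eq_zero fun m' _ =>
          mul_eq_zero_of_right _ <| P2_eq_zero (Or.inr (by lia))
end
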